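/- Let V be an n-dimensional vector space over the finite field 𝔽_q, let t ≥ 1 and n ≥ 2t+1, and let F be a cover-free family of 2t-dimensional subspaces of V. Then |F| = [n-1 choose t]_q / [2t-1 choose t]_q holds if and only if F = {E ⊕ S : S ∈ S}, where E is a 1-dimensional subspace of V and S is a q-Steiner system S_q(t, 2t-1, n-1) on some (n-1)-dimensional subspace W of V satisfying E ⊕ W = V. -/

import Mathlib

/-- A family of subspaces is cover-free if there are no three distinct members
`F₀, F₁, F₂` with `F₀ ≤ (F₀ ⊓ F₁) ⊔ (F₀ ⊓ F₂)`. -/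
def IsCoverFree {K V : Type*} [Field K] [AddCommGroup V] [Module K V]
    (F : Set (Submodule K V)) : Prop :=
  ¬ ∃ F₀ F₁ F₂ : Submodule K V, F₀ ∈ F ∧ F₁ ∈ F ∧ F₂ ∈ F ∧
    F₀ ≠ F₁ ∧ F₀ ≠ F₂ ∧ F₁ ≠ F₂ ∧ F₀ ≤ (F₀ ⊓ F₁) ⊔ (F₀ ⊓ F₂)

/-- The Gaussian binomial coefficient `[m choose k]_q` as a rational number. -/
def GaussQ (q m k : ℕ) : ℚ :=
  ∏ i ∈ Finset.range k, ((q : ℚ) ^ (m - i) - 1) / ((q : ℚ) ^ (k - i) - 1)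

/-!
Put `t = s + 1`. Since `F` is cover-free, whenever a member `G` of `F` is a sum `A ⊔ B`, one of `A`
and `B` lies in no other member: it is an *own* subspace of `G`. Taking for `A` and `B` two blocks
of a spread shows that a proportion of at least `q ^ t / (q ^ t + 1)` of the `t`-dimensional
subspaces of `G` is own, and complementary pairs give that the proportions in dimensions `t - 1` and
`t + 1` add up to at least `1`.

Move a flag of dimensions `t - 1`, `t`, `t + 1` by a random element of the general linear group. Its
own subspaces all belong to one member of `F`, so the events "the flag contains an own subspace of
`G`" are disjoint for distinct `G`, while the two proportions above bound the probability of each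
from below by `[2t-1 choose t] / [n-1 choose t]`. This is the upper bound on `|F|`, and if it is
attained then every flag contains an own subspace and a proportion of exactly `1 / (q ^ t + 1)` of
the `t`-dimensional subspaces of each `G` is not own.

In that case call `X` *bad* if no `t`-dimensional subspace above `X` is own. Two distinct bad
`(k + 1)`-dimensional subspaces above a common `k`-dimensional one make the latter bad. Hence, going
down from dimension `t`, the proportion of bad `k`-dimensional subspaces of `G` is at least
`(q ^ k - 1) / (q ^ (2 * t) - 1)`, and there is a bad line `E`. The flag condition forces `E` into
every member of `F` and makes every `t`-dimensional subspace that avoids `E` own, so intersecting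
`F` with a complement of `E` gives the Steiner system.
-/

open Finset Module Submodule
open scoped BigOperators Pointwise

section GaussianBinomial

variable {q : ℕ} (m k : ℕ)

theorem gaussQ_pos {m k : ℕ} (hq : 1 < q) (hk : k ≤ m) : 0 < GaussQ q m k := by
  have pow_sub_one_pos {m i : ℕ} (hi : i < m) : 0 < (q : ℚ) ^ (m - i) - 1 :=
    sub_pos.2 (one_lt_pow₀ (by exact_mod_cast hq) (by omega))
  refine prod_pos fun i hi => ?_
  rw [mem_range] at hi
  exact div_pos (pow_sub_one_pos (hi.trans_le hk)) (pow_sub_one_pos hi)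

theorem gaussQ_succ_left_mul :
    GaussQ q (m + 1) k * ((q : ℚ) ^ (m + 1 - k) - 1) = GaussQ q m k * ((q : ℚ) ^ (m + 1) - 1) := by
  have hprod := (prod_range_succ (fun i => (q : ℚ) ^ (m + 1 - i) - 1) k).symm.trans
    (prod_range_succ' (fun i => (q : ℚ) ^ (m + 1 - i) - 1) k)
  simp only [Nat.add_sub_add_right, Nat.sub_zero] at hprod
  rw [GaussQ, GaussQ, prod_div_distrib, prod_div_distrib, div_mul_eq_mul_div, hprod,
    div_mul_eq_mul_div]

theorem gaussQ_succ_right_mul (hq : 1 < q) :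
    GaussQ q m (k + 1) * ((q : ℚ) ^ (k + 1) - 1) = GaussQ q m k * ((q : ℚ) ^ (m - k) - 1) := by
  have hne : (q : ℚ) ^ (k + 1) - 1 ≠ 0 :=
    (sub_pos.2 (one_lt_pow₀ (by exact_mod_cast hq) (by omega))).ne'
  rw [GaussQ, GaussQ, prod_div_distrib, prod_div_distrib, prod_range_succ,
    prod_range_succ' (fun i => (q : ℚ) ^ (k + 1 - i) - 1)]
  simp only [Nat.add_sub_add_right, Nat.sub_zero]
  rw [mul_div_mul_comm, mul_assoc, div_mul_cancel₀ _ hne]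

end GaussianBinomial

section Averaging

theorem expect_smul_eq_expect_of_orbit {Γ X M : Type*} [Group Γ] [Fintype Γ] [MulAction Γ X]
    [AddCommMonoid M] [Module ℚ≥0 M] {x : X} {s : Finset X}
    (hs : (s : Set X) = MulAction.orbit Γ x) (f : X → M) :
    𝔼 g : Γ, f (g • x) = 𝔼 y ∈ s, f y := by
  have smul_mem (g : Γ) {y : X} (hy : y ∈ s) : g • y ∈ s := by
    rw [← mem_coe, hs] at hy ⊢
    exact (MulAction.mem_orbit_iff.mp hy).elim fun h hh => ⟨g * h, by simp [mul_smul, ← hh]⟩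
  have expect_const_on_orbit (y : X) (hy : y ∈ s) : 𝔼 g : Γ, f (g • y) = 𝔼 g : Γ, f (g • x) := by
    rw [← mem_coe, hs] at hy
    obtain ⟨h, rfl⟩ := hy
    exact Fintype.expect_equiv (Equiv.mulRight h) _ _ fun g => by simp [mul_smul]
  have hne : s.Nonempty := ⟨x, by rw [← mem_coe, hs]; exact MulAction.mem_orbit_self x⟩
  calc 𝔼 g : Γ, f (g • x) = 𝔼 y ∈ s, 𝔼 g : Γ, f (g • y) := by
        rw [expect_congr rfl expect_const_on_orbit, expect_const hne]
    _ = 𝔼 g : Γ, 𝔼 y ∈ s, f (g • y) := expect_comm ..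
    _ = 𝔼 _g : Γ, 𝔼 y ∈ s, f y := expect_congr rfl fun g _ =>
        expect_nbij' (g • ·) (g⁻¹ • ·) (fun _ => smul_mem g) (fun _ => smul_mem g⁻¹)
          (by simp) (by simp) (by simp)
    _ = 𝔼 y ∈ s, f y := Fintype.expect_const _

variable {ι Ω : Type*} {s : Finset ι} {E : ι → Set Ω}

theorem sum_indicator_one_le_one {R : Type*} [Semiring R] [PartialOrder R] [ZeroLEOneClass R]
    (hE : (s : Set ι).PairwiseDisjoint E) (ω : Ω) :
    ∑ i ∈ s, (E i).indicator (1 : Ω → R) ω ≤ 1 := by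
  rw [← indicator_biUnion_apply s E hE]
  exact Set.indicator_apply_le' (fun _ => le_rfl) fun _ => zero_le_one

theorem expect_eq_and_exists_mem_of_card_mul_eq_one [Fintype Ω] [Nonempty Ω]
    (hE : (s : Set ι).PairwiseDisjoint E) {c : ℚ}
    (hc : ∀ i ∈ s, c ≤ 𝔼 ω, (E i).indicator 1 ω) (hsc : #s * c = 1) :
    (∀ i ∈ s, 𝔼 ω, (E i).indicator (1 : Ω → ℚ) ω = c) ∧ ∀ ω, ∃ i ∈ s, ω ∈ E i := by
  have hle (ω : Ω) : 0 ≤ 1 - ∑ i ∈ s, (E i).indicator (1 : Ω → ℚ) ω :=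
    sub_nonneg.2 (sum_indicator_one_le_one hE ω)
  have hdefect : 𝔼 ω, (1 - ∑ i ∈ s, (E i).indicator (1 : Ω → ℚ) ω)
      = ∑ i ∈ s, (c - 𝔼 ω, (E i).indicator (1 : Ω → ℚ) ω) := by
    rw [expect_sub_distrib, Fintype.expect_const, expect_sum_comm, sum_sub_distrib, sum_const,
      nsmul_eq_mul, hsc]
  have hterm : ∀ i ∈ s, c - 𝔼 ω, (E i).indicator (1 : Ω → ℚ) ω ≤ 0 :=
    fun i hi => sub_nonpos.2 (hc i hi)
  have hzero : 𝔼 ω, (1 - ∑ i ∈ s, (E i).indicator (1 : Ω → ℚ) ω) = 0 :=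
    le_antisymm (hdefect ▸ sum_nonpos hterm) (expect_nonneg fun ω _ => hle ω)
  refine ⟨fun i hi => ?_, fun ω => ?_⟩
  · have := (sum_eq_zero_iff_of_nonpos hterm).1 (hdefect ▸ hzero) i hi
    linarith
  · have hsum := (expect_eq_zero_iff_of_nonneg fun ω _ => hle ω).1 hzero ω (mem_univ ω)
    obtain ⟨i, hi, hne⟩ := exists_ne_zero_of_sum_ne_zero (by rw [← sub_eq_zero.1 hsum]; simp)
    exact ⟨i, hi, Set.mem_of_indicator_ne_zero hne⟩

end Averaging

section LinearAlgebra

variable {K V : Type*} [Field K] [AddCommGroup V] [Module K V]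

theorem exists_inf_eq_sup_eq {A B C : Submodule K V} (hCA : C ≤ A) (hAB : A ≤ B) :
    ∃ D, A ⊓ D = C ∧ A ⊔ D = B := by
  obtain ⟨Q, hQ⟩ := Submodule.exists_isCompl A
  refine ⟨C ⊔ (Q ⊓ B), ?_, ?_⟩
  · rw [inf_comm, sup_inf_assoc_of_le _ hCA, inf_right_comm, hQ.symm.inf_eq_bot, bot_inf_eq,
      sup_bot_eq]
  · rw [← sup_assoc, sup_eq_left.2 hCA, ← sup_inf_assoc_of_le _ hAB, hQ.sup_eq_top, top_inf_eq]

theorem finrank_smul (g : V ≃ₗ[K] V) (A : Submodule K V) :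
    finrank K ↥(g • A) = finrank K A :=
  LinearEquiv.finrank_map_eq g A

theorem apply_mem_smul_iff (g : V ≃ₗ[K] V) {A : Submodule K V} {x : V} :
    g x ∈ g • A ↔ x ∈ A :=
  g.injective.mem_set_image

theorem smul_sup_span_singleton (g : V ≃ₗ[K] V) (C : Submodule K V) (y : V) :
    g • (C ⊔ span K {y}) = g • C ⊔ span K {g y} := by
  rw [smul_sup', smul_span, Set.smul_set_singleton, LinearEquiv.smul_def]

theorem smul_sup_smul_eq {A B U : Submodule K V} (g : MulAction.stabilizer (V ≃ₗ[K] V) U)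
    (hAB : A ⊔ B = U) : g • A ⊔ g • B = U :=
  (smul_sup' g.1 A B).symm.trans ((congrArg (g.1 • ·) hAB).trans g.2)

theorem smul_le_iff_of_stabilizer {A U : Submodule K V}
    (g : MulAction.stabilizer (V ≃ₗ[K] V) U) : g.1 • A ≤ U ↔ A ≤ U := by
  have hmap : g.1 • A ≤ g.1 • U ↔ A ≤ U := map_le_map_iff_of_injective g.1.injective A U
  rwa [MulAction.mem_stabilizer_iff.1 g.2] at hmap

theorem setOf_smul_sup_span_mem_eq_image {U : Submodule K V} {P : Set (Submodule K V)}
    (g : MulAction.stabilizer (V ≃ₗ[K] V) U) (C : Submodule K V) :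
    {y ∈ (U : Set V) \ ↑(g • C) | (g • C) ⊔ span K {y} ∈ P} =
      g.1 '' {y ∈ (U : Set V) \ C | g • (C ⊔ span K {y}) ∈ P} := by
  ext x
  obtain ⟨y, rfl⟩ := g.1.surjective x
  have hU : g.1 y ∈ U ↔ y ∈ U := (SetLike.ext_iff.1 g.2 _).symm.trans (apply_mem_smul_iff g.1)
  have hC : g.1 y ∈ g • C ↔ y ∈ C := apply_mem_smul_iff g.1
  have hspan : g • (C ⊔ span K {y}) = (g • C) ⊔ span K {g.1 y} := smul_sup_span_singleton g.1 C y
  rw [g.1.injective.mem_set_image]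
  simp [hU, hC, hspan]

theorem ncard_sdiff_of_le [Finite V] {A B : Submodule K V} (hAB : A ≤ B) :
    (((B : Set V) \ A).ncard : ℚ) = Nat.card K ^ finrank K B - Nat.card K ^ finrank K A := by
  have hcard (C : Submodule K V) : (C : Set V).ncard = Nat.card K ^ finrank K C :=
    natCard_eq_pow_finrank (K := K) (V := C)
  rw [Set.cast_ncard_sdiff hAB (Set.toFinite _), hcard, hcard]
  push_cast
  rfl

variable [FiniteDimensional K V]

theorem exists_between_finrank_eq {A B : Submodule K V} (hAB : A ≤ B) {k : ℕ}
    (hAk : finrank K A ≤ k) (hkB : k ≤ finrank K B) :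
    ∃ C, A ≤ C ∧ C ≤ B ∧ finrank K C = k := by
  induction k, hAk using Nat.le_induction with
  | base => exact ⟨A, le_rfl, hAB, rfl⟩
  | succ k _ ih =>
    obtain ⟨C, hAC, hCB, hC⟩ := ih (by omega)
    obtain ⟨x, hxB, hxC⟩ := SetLike.not_le_iff_exists.1 fun h : B ≤ C => by
      have := finrank_mono h
      omega
    exact ⟨C ⊔ span K {x}, hAC.trans le_sup_left,
      sup_le hCB ((span_singleton_le_iff_mem _ _).2 hxB), by
      rw [finrank_sup_span_singleton hxC, hC]⟩

theorem finrank_sup_of_ne {m : ℕ} {A B C : Submodule K V} (hC : finrank K C = m)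
    (hA : finrank K A = m + 1) (hB : finrank K B = m + 1) (hCA : C ≤ A) (hCB : C ≤ B)
    (hne : A ≠ B) : finrank K ↥(A ⊔ B) = m + 2 := by
  have hdim := finrank_sup_add_finrank_inf_eq A B
  have hC_le := finrank_mono (le_inf hCA hCB)
  have hinf_lt : finrank K ↥(A ⊓ B) < finrank K A :=
    finrank_lt_finrank_of_lt <| inf_lt_left.2 fun h =>
      hne (eq_of_le_of_finrank_eq h (hA.trans hB.symm))
  omega

theorem finrank_sup_of_finrank_eq_one {A E : Submodule K V} (hE : finrank K E = 1)
    (hEA : ¬ E ≤ A) : finrank K ↥(E ⊔ A) = finrank K A + 1 := by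
  have hdim := finrank_sup_add_finrank_inf_eq E A
  have hinf_lt : finrank K ↥(E ⊓ A) < finrank K E :=
    finrank_lt_finrank_of_lt (inf_lt_left.2 hEA)
  omega

theorem exists_linearEquiv_extending {A B : Submodule K V} (e : A ≃ₗ[K] B) :
    ∃ g : V ≃ₗ[K] V, ∀ C : Submodule K A,
      g • C.map A.subtype = (C.map e.toLinearMap).map B.subtype := by
  obtain ⟨A', hA⟩ := Submodule.exists_isCompl A
  obtain ⟨B', hB⟩ := Submodule.exists_isCompl B
  have e' : A' ≃ₗ[K] B' := LinearEquiv.ofFinrankEq _ _ <| by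
    have hAdim := finrank_add_eq_of_isCompl hA
    have hBdim := finrank_add_eq_of_isCompl hB
    have := e.finrank_eq
    omega
  let g := (prodEquivOfIsCompl A A' hA).symm ≪≫ₗ (e.prodCongr e') ≪≫ₗ prodEquivOfIsCompl B B' hB
  have hg : g.toLinearMap ∘ₗ A.subtype = B.subtype ∘ₗ e.toLinearMap := by ext a; simp [g]
  refine ⟨g, fun C => ?_⟩
  rw [← map_comp, ← hg, map_comp]
  rfl

theorem exists_smul_eq_of_finrank_eq {A B : Submodule K V} (hAB : finrank K A = finrank K B) :
    ∃ g : V ≃ₗ[K] V, g • A = B := by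
  obtain ⟨g, hg⟩ := exists_linearEquiv_extending (LinearEquiv.ofFinrankEq A B hAB)
  exact ⟨g, by simpa using hg ⊤⟩

theorem orbit_linearEquiv_eq (A : Submodule K V) :
    MulAction.orbit (V ≃ₗ[K] V) A = {B : Submodule K V | finrank K B = finrank K A} := by
  ext B
  constructor
  · rintro ⟨g, rfl⟩
    exact finrank_smul g A
  · exact fun hB => exists_smul_eq_of_finrank_eq hB.symm

theorem orbit_stabilizer_eq {A U : Submodule K V} (hA : A ≤ U) :
    MulAction.orbit (MulAction.stabilizer (V ≃ₗ[K] V) U) A =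
      {B | B ≤ U ∧ finrank K B = finrank K A} := by
  ext B
  constructor
  · rintro ⟨⟨g, hg⟩, rfl⟩
    exact ⟨(smul_mono_right g hA).trans_eq hg, finrank_smul g A⟩
  · rintro ⟨hB, hBA⟩
    obtain ⟨A, rfl⟩ : ∃ A' : Submodule K U, A'.map U.subtype = A :=
      ⟨A.submoduleOf U, by simpa [submoduleOf, map_comap_subtype] using hA⟩
    obtain ⟨B, rfl⟩ : ∃ B' : Submodule K U, B'.map U.subtype = B :=
      ⟨B.submoduleOf U, by simpa [submoduleOf, map_comap_subtype] using hB⟩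
    simp only [finrank_map_subtype_eq] at hBA
    obtain ⟨e, rfl⟩ := exists_smul_eq_of_finrank_eq hBA.symm
    obtain ⟨g, hg⟩ := exists_linearEquiv_extending e
    exact ⟨⟨g, by simpa using hg ⊤⟩, hg A⟩

end LinearAlgebra

section Spread

theorem finrank_restrictScalars {K L W : Type*} [Field K] [Field L] [Algebra K L] [AddCommGroup W]
    [Module K W] [Module L W] [IsScalarTower K L W] (P : Submodule L W) :
    finrank K ↥(P.restrictScalars K) = finrank K L * finrank L P :=
  (finrank_mul_finrank K L P).symm

theorem sup_eq_top_of_finrank_eq_two {L W : Type*} [Field L] [AddCommGroup W] [Module L W]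
    (hW : finrank L W = 2) {P Q : Submodule L W} (hP : finrank L P = 1) (hQ : finrank L Q = 1)
    (hPQ : P ≠ Q) : P ⊔ Q = ⊤ := by
  have : FiniteDimensional L W := .of_finrank_pos (by omega)
  exact eq_top_of_finrank_eq <| by
    rw [finrank_sup_of_ne (finrank_bot L W) hP hQ bot_le bot_le hPQ, hW]

variable {K V : Type*} [Field K] [Finite K] [AddCommGroup V] [Module K V]

-- The blocks are the lines through the origin of the plane over `𝔽_{q^t}`.
theorem exists_spread {U : Submodule K V} {t : ℕ} (ht : t ≠ 0) (hU : finrank K U = 2 * t) :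
    ∃ s : Finset (Submodule K V), #s = Nat.card K ^ t + 1 ∧
      (∀ A ∈ s, A ≤ U ∧ finrank K A = t) ∧ (s : Set (Submodule K V)).Pairwise (· ⊔ · = U) := by
  classical
  obtain ⟨p, _⟩ := CharP.exists K
  have : NeZero t := ⟨ht⟩
  have : Fact p.Prime := ⟨CharP.char_is_prime K p⟩
  let L := FiniteField.Extension K p t
  have hL : finrank K L = t := FiniteField.finrank_extension K p t
  have : Module.Finite K U := finite_of_finrank_pos (by omega)
  let e : (L × L) ≃ₗ[K] U := LinearEquiv.ofFinrankEq _ _ (by rw [finrank_prod, hL, hU, two_mul])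
  have : Fintype (Projectivization L (L × L)) := Fintype.ofFinite _
  let f : (L × L) →ₗ[K] V := U.subtype ∘ₗ e.toLinearMap
  have hf : Function.Injective f := U.subtype_injective.comp e.injective
  have hf_top : (⊤ : Submodule K (L × L)).map f = U := by simp [f]
  let block (P : Projectivization L (L × L)) : Submodule K V :=
    (P.submodule.restrictScalars K).map f
  have block_injective : Function.Injective block :=
    (map_injective_of_injective hf).comp <|
      (restrictScalars_injective K L (L × L)).comp Projectivization.submodule_injective
  refine ⟨univ.image block, ?_, ?_, ?_⟩
  · rw [card_image_of_injective _ block_injective, card_univ, Fintype.card_eq_nat_card,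
      Projectivization.card_of_finrank_two _ _ (by simp), FiniteField.natCard_extension K p t]
  · rw [forall_mem_image]
    refine fun P _ => ⟨(map_mono le_top).trans_eq hf_top, ?_⟩
    rw [(equivMapOfInjective f hf _).symm.finrank_eq, finrank_restrictScalars, hL,
      P.finrank_submodule, mul_one]
  · rw [coe_image, coe_univ, Set.image_univ]
    rintro _ ⟨P, rfl⟩ _ ⟨Q, rfl⟩ hPQ
    have hsup : P.submodule ⊔ Q.submodule = ⊤ :=
      sup_eq_top_of_finrank_eq_two (by simp) P.finrank_submodule Q.finrank_submodule
        fun h => hPQ (congrArg block (Projectivization.submodule_injective h))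
    rw [← Submodule.map_sup, ← restrictScalars_sup, hsup, restrictScalars_top, hf_top]

end Spread

section Density

attribute [local instance] Fintype.ofFinite

variable {K V : Type*} [Field K] [AddCommGroup V] [Module K V] [Finite V]

/-- The `k`-dimensional subspaces of `U`, written `[U choose k]` in the literature. -/
noncomputable def subspacesOfDim (U : Submodule K V) (k : ℕ) : Finset (Submodule K V) :=
  {A : Submodule K V | A ≤ U ∧ finrank K A = k}.toFinite.toFinset

/-- The proportion of the `k`-dimensional subspaces of `U` that belong to `P`, that is, the
probability that a random one does. It is `0` when `U` has no `k`-dimensional subspace. -/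
noncomputable def density (U : Submodule K V) (k : ℕ) (P : Set (Submodule K V)) : ℚ :=
  𝔼 A ∈ subspacesOfDim U k, P.indicator 1 A

theorem mem_subspacesOfDim {A U : Submodule K V} {k : ℕ} :
    A ∈ subspacesOfDim U k ↔ A ≤ U ∧ finrank K A = k := by
  simp [subspacesOfDim]

instance : Finite (V ≃ₗ[K] V) := DFunLike.finite _

variable {A U : Submodule K V} {j k : ℕ} {P : Set (Submodule K V)}

theorem expect_smul_eq_expect_subspacesOfDim {M : Type*} [AddCommMonoid M] [Module ℚ≥0 M]
    (hA : A ∈ subspacesOfDim U k) (f : Submodule K V → M) :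
    𝔼 g : MulAction.stabilizer (V ≃ₗ[K] V) U, f (g • A) = 𝔼 B ∈ subspacesOfDim U k, f B := by
  obtain ⟨hAU, rfl⟩ := mem_subspacesOfDim.1 hA
  refine expect_smul_eq_expect_of_orbit ?_ f
  rw [orbit_stabilizer_eq hAU]
  exact Set.ext fun B => mem_subspacesOfDim

theorem subspacesOfDim_nonempty (hk : k ≤ finrank K U) : (subspacesOfDim U k).Nonempty := by
  obtain ⟨A, -, hAU, hA⟩ := exists_between_finrank_eq (bot_le : ⊥ ≤ U) (by simp) hk
  exact ⟨A, mem_subspacesOfDim.2 ⟨hAU, hA⟩⟩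

theorem exists_mem_of_density_pos (h : 0 < density U k P) :
    ∃ A ≤ U, finrank K A = k ∧ A ∈ P := by
  obtain ⟨A, hA, hAP⟩ := exists_ne_zero_of_expect_ne_zero h.ne'
  obtain ⟨hAU, hAk⟩ := mem_subspacesOfDim.1 hA
  exact ⟨A, hAU, hAk, Set.mem_of_indicator_ne_zero hAP⟩

theorem notMem_of_density_eq_zero (h : density U k P = 0) (hAU : A ≤ U) (hA : finrank K A = k) :
    A ∉ P := by
  rw [density, expect_eq_zero_iff_of_nonneg fun _ _ => Set.indicator_nonneg (by simp) _] at h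
  simpa using h A (mem_subspacesOfDim.2 ⟨hAU, hA⟩)

theorem one_le_density_add_density (hjk : j + k = finrank K U)
    (hP : ∀ A B : Submodule K V, finrank K A = j → finrank K B = k → A ⊔ B = U → A ∈ P ∨ B ∈ P) :
    1 ≤ density U j P + density U k P := by
  obtain ⟨A, -, hAU, hA⟩ := exists_between_finrank_eq (bot_le : ⊥ ≤ U) (k := j) (by simp) (by omega)
  obtain ⟨B, hinf, hsup⟩ := exists_inf_eq_sup_eq bot_le hAU
  have hB : finrank K B = k := by
    have := finrank_sup_add_finrank_inf_eq A B
    rw [hinf, hsup, finrank_bot] at this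
    omega
  rw [density, density,
    ← expect_smul_eq_expect_subspacesOfDim (mem_subspacesOfDim.2 ⟨hAU, hA⟩),
    ← expect_smul_eq_expect_subspacesOfDim (mem_subspacesOfDim.2 ⟨hsup ▸ le_sup_right, hB⟩),
    ← expect_add_distrib]
  refine le_expect univ_nonempty fun g _ => ?_
  rcases hP (g • A) (g • B) ((finrank_smul g.1 A).trans hA) ((finrank_smul g.1 B).trans hB)
    (smul_sup_smul_eq g hsup) with h | h
  · rw [Set.indicator_of_mem h]
    exact le_add_of_nonneg_right (Set.indicator_nonneg (by simp) _)
  · rw [Set.indicator_of_mem h]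
    exact le_add_of_nonneg_left (Set.indicator_nonneg (by simp) _)

theorem density_compl (hk : k ≤ finrank K U) : density U k Pᶜ = 1 - density U k P := by
  simp only [density, Set.indicator_compl, Pi.sub_apply, expect_sub_distrib, Pi.one_apply,
    expect_const (subspacesOfDim_nonempty hk)]

theorem density_succ_mul (hk : k < finrank K U) :
    density U (k + 1) P * (Nat.card K ^ finrank K U - Nat.card K ^ k) =
      𝔼 C ∈ subspacesOfDim U k, ({y ∈ (U : Set V) \ C | C ⊔ span K {y} ∈ P}.ncard : ℚ) := by
  classical
  obtain ⟨C, hC⟩ := subspacesOfDim_nonempty hk.le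
  obtain ⟨hCU, hCk⟩ := mem_subspacesOfDim.1 hC
  let Y : Finset V := ((U : Set V) \ C).toFinite.toFinset
  have hcount (g : MulAction.stabilizer (V ≃ₗ[K] V) U) :
      ({y ∈ (U : Set V) \ ↑(g • C) | (g • C) ⊔ span K {y} ∈ P}.ncard : ℚ) =
        ∑ y ∈ Y, P.indicator 1 (g • (C ⊔ span K {y})) := by
    have hfilter : {y ∈ (U : Set V) \ C | g • (C ⊔ span K {y}) ∈ P} =
        ({y ∈ Y | g • (C ⊔ span K {y}) ∈ P} : Finset V) := by ext; simp [Y]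
    rw [setOf_smul_sup_span_mem_eq_image, Set.ncard_image_of_injective _ g.1.injective, hfilter,
      Set.ncard_coe_finset, card_filter]
    push_cast
    exact sum_congr rfl fun y _ => by simp [Set.indicator_apply]
  have hdensity : ∀ y ∈ Y, 𝔼 g : MulAction.stabilizer (V ≃ₗ[K] V) U,
      (P.indicator 1 (g • (C ⊔ span K {y})) : ℚ) = density U (k + 1) P := by
    intro y hy
    obtain ⟨hyU, hyC⟩ : y ∈ U ∧ y ∉ C := by simpa [Y] using hy
    refine expect_smul_eq_expect_subspacesOfDim (mem_subspacesOfDim.2 ⟨?_, ?_⟩) (P.indicator 1)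
    · exact sup_le hCU ((span_singleton_le_iff_mem _ _).2 hyU)
    · rw [finrank_sup_span_singleton hyC, hCk]
  rw [← expect_smul_eq_expect_subspacesOfDim hC]
  simp only [hcount]
  rw [expect_sum_comm, sum_congr rfl hdensity, sum_const, nsmul_eq_mul, mul_comm, ← hCk,
    ← ncard_sdiff_of_le hCU, Set.ncard_eq_toFinset_card _]

theorem density_Iic_succ_mul (hA : A ≤ U) (hk : k < finrank K U) :
    density U (k + 1) (Set.Iic A) * (Nat.card K ^ finrank K U - Nat.card K ^ k) =
      density U k (Set.Iic A) * (Nat.card K ^ finrank K A - Nat.card K ^ k) := by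
  rw [density_succ_mul hk, density, expect_mul]
  refine expect_congr rfl fun C hC => ?_
  obtain ⟨-, rfl⟩ := mem_subspacesOfDim.1 hC
  by_cases hCA : C ≤ A
  · have hset : {y ∈ (U : Set V) \ C | C ⊔ span K {y} ∈ Set.Iic A} = (A : Set V) \ C := by
      ext y
      simpa [hCA, and_comm, and_assoc] using fun hy _ => hA hy
    rw [hset, ncard_sdiff_of_le hCA, Set.indicator_of_mem (Set.mem_Iic.2 hCA), Pi.one_apply,
      one_mul]
  · simp [hCA]

section FiniteField

variable [Finite K]

-- A random image of a spread of `U` has at most one of its `q ^ t + 1` blocks outside `P`.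
theorem density_compl_mul_le {t : ℕ} (ht : t ≠ 0) (hU : finrank K U = 2 * t)
    (hP : ∀ A B : Submodule K V, finrank K A = t → finrank K B = t → A ⊔ B = U → A ∈ P ∨ B ∈ P) :
    density U t Pᶜ * (Nat.card K ^ t + 1) ≤ 1 := by
  obtain ⟨s, hs, hsU, hsup⟩ := exists_spread ht hU
  let E (A : Submodule K V) : Set (MulAction.stabilizer (V ≃ₗ[K] V) U) := {g | g • A ∈ Pᶜ}
  have hE : (s : Set (Submodule K V)).PairwiseDisjoint E := by
    intro A hA B hB hAB
    refine Set.disjoint_left.2 fun g hgA hgB => ?_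
    rcases hP (g • A) (g • B) ((finrank_smul g.1 A).trans (hsU A hA).2)
      ((finrank_smul g.1 B).trans (hsU B hB).2)
      (smul_sup_smul_eq g (hsup hA hB hAB)) with h | h
    exacts [hgA h, hgB h]
  have hdensity : ∀ A ∈ s, 𝔼 g, ((E A).indicator 1 g : ℚ) = density U t Pᶜ := fun A hA =>
    expect_smul_eq_expect_subspacesOfDim (mem_subspacesOfDim.2 (hsU A hA)) (Pᶜ.indicator 1)
  calc density U t Pᶜ * (Nat.card K ^ t + 1) = ∑ A ∈ s, 𝔼 g, (E A).indicator 1 g := by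
        rw [sum_congr rfl hdensity, sum_const, hs, nsmul_eq_mul, mul_comm]
        push_cast
        rfl
    _ = 𝔼 g, ∑ A ∈ s, (E A).indicator 1 g := (expect_sum_comm ..).symm
    _ ≤ 1 := expect_le univ_nonempty fun g _ => sum_indicator_one_le_one hE g

theorem density_Iic_succ_mul_sub_one (hA : A ≤ U) (hk : k < finrank K A) :
    density U (k + 1) (Set.Iic A) * (Nat.card K ^ (finrank K U - k) - 1) =
      density U k (Set.Iic A) * (Nat.card K ^ (finrank K A - k) - 1) := by
  have hAU := finrank_mono hA
  have hpow {m : ℕ} (hm : k ≤ m) :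
      (Nat.card K : ℚ) ^ m - Nat.card K ^ k = (Nat.card K ^ (m - k) - 1) * Nat.card K ^ k := by
    rw [sub_mul, ← pow_add, Nat.sub_add_cancel hm, one_mul]
  have hsucc := density_Iic_succ_mul hA (hk.trans_le hAU)
  rw [hpow (by omega), hpow hk.le, ← mul_assoc, ← mul_assoc] at hsucc
  exact mul_right_cancel₀ (pow_ne_zero k (Nat.cast_ne_zero.2 Nat.card_pos.ne')) hsucc

theorem density_Iic_mul_gaussQ (hA : A ≤ U) (hk : k ≤ finrank K A) :
    density U k (Set.Iic A) * GaussQ (Nat.card K) (finrank K U) k =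
      GaussQ (Nat.card K) (finrank K A) k := by
  have hq : 1 < Nat.card K := Finite.one_lt_card
  induction k with
  | zero =>
    have hbot : density U 0 (Set.Iic A) = 1 := by
      rw [density, ← expect_const (subspacesOfDim_nonempty (Nat.zero_le (finrank K U))) (1 : ℚ)]
      refine expect_congr rfl fun C hC => Set.indicator_of_mem ?_ 1
      rw [(Submodule.finrank_eq_zero (R := K)).1 (mem_subspacesOfDim.1 hC).2]
      exact Set.mem_Iic.2 bot_le
    simp [hbot, GaussQ]
  | succ k ih =>
    have hqk : (Nat.card K : ℚ) ^ (k + 1) - 1 ≠ 0 :=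
      (sub_pos.2 (one_lt_pow₀ (by exact_mod_cast hq) k.succ_ne_zero)).ne'
    refine mul_right_cancel₀ hqk ?_
    linear_combination
      density U (k + 1) (Set.Iic A) * gaussQ_succ_right_mul (finrank K U) k hq
      + GaussQ (Nat.card K) (finrank K U) k * density_Iic_succ_mul_sub_one hA hk
      + (Nat.card K ^ (finrank K A - k) - 1) * ih (by omega)
      - gaussQ_succ_right_mul (finrank K A) k hq

theorem density_Iic_pos (hA : A ≤ U) (hk : k ≤ finrank K A) : 0 < density U k (Set.Iic A) :=
  have hq : 1 < Nat.card K := Finite.one_lt_card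
  pos_of_mul_pos_left (density_Iic_mul_gaussQ hA hk ▸ gaussQ_pos hq hk)
    (gaussQ_pos hq (hk.trans (finrank_mono hA))).le

theorem density_succ_mul_le (hk : k < finrank K U)
    (hP : ∀ C X Y : Submodule K V, finrank K C = k → finrank K X = k + 1 → finrank K Y = k + 1 →
      C ≤ X → C ≤ Y → X ≠ Y → X ∈ P → Y ∈ P → C ∈ P) :
    density U (k + 1) P * (Nat.card K ^ finrank K U - Nat.card K ^ k) ≤
      density U k P * (Nat.card K ^ finrank K U - Nat.card K ^ k) +
        (1 - density U k P) * (Nat.card K ^ (k + 1) - Nat.card K ^ k) := by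
  rw [density_succ_mul hk, ← density_compl hk.le, density, density, expect_mul, expect_mul,
    ← expect_add_distrib]
  refine expect_le_expect fun C hC => ?_
  obtain ⟨hCU, rfl⟩ := mem_subspacesOfDim.1 hC
  by_cases hCP : C ∈ P
  · simp only [Set.indicator_of_mem hCP, Set.indicator_of_notMem (Set.notMem_compl_iff.2 hCP),
      Pi.one_apply, one_mul, zero_mul, add_zero, ← ncard_sdiff_of_le hCU]
    exact_mod_cast Set.ncard_le_ncard (Set.sep_subset _ _)
  · simp only [Set.indicator_of_notMem hCP, Set.indicator_of_mem (Set.mem_compl hCP),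
      Pi.one_apply, one_mul, zero_mul, zero_add]
    obtain hempty | ⟨x, hx⟩ := Set.eq_empty_or_nonempty
      {y ∈ (U : Set V) \ C | C ⊔ span K {y} ∈ P}
    · rw [hempty, Set.ncard_empty, Nat.cast_zero, sub_nonneg]
      exact pow_le_pow_right₀ (by exact_mod_cast Nat.card_pos) (Nat.le_succ _)
    · have hsucc {y : V} (hy : y ∉ C) : finrank K ↥(C ⊔ span K {y}) = finrank K C + 1 :=
        finrank_sup_span_singleton hy
      rw [← hsucc hx.1.2, ← ncard_sdiff_of_le le_sup_left, Nat.cast_le]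
      refine Set.ncard_le_ncard fun y hy => ⟨?_, hy.1.2⟩
      have heq : C ⊔ span K {y} = C ⊔ span K {x} := by
        by_contra hne
        exact hCP (hP C _ _ rfl (hsucc hy.1.2) (hsucc hx.1.2) le_sup_left le_sup_left hne hy.2 hx.2)
      exact heq ▸ mem_sup_right (mem_span_singleton_self y)

theorem pow_sub_one_le_density_mul {t : ℕ} (ht : t < finrank K U)
    (hP : ∀ k < t, ∀ C X Y : Submodule K V, finrank K C = k → finrank K X = k + 1 →
      finrank K Y = k + 1 → C ≤ X → C ≤ Y → X ≠ Y → X ∈ P → Y ∈ P → C ∈ P)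
    (hPt : (Nat.card K : ℚ) ^ t - 1 ≤ density U t P * (Nat.card K ^ finrank K U - 1))
    (hk : k ≤ t) :
    (Nat.card K : ℚ) ^ k - 1 ≤ density U k P * (Nat.card K ^ finrank K U - 1) := by
  have hq : (1 : ℚ) < Nat.card K := by exact_mod_cast Finite.one_lt_card
  induction hk using Nat.decreasingInduction with
  | self => exact hPt
  | of_succ k hk ih =>
    have hstep := density_succ_mul_le (hk.trans ht) (hP k hk)
    have hb : (Nat.card K : ℚ) ^ (k + 1) < Nat.card K ^ finrank K U :=
      pow_lt_pow_right₀ hq (by omega)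
    have ha : (0 : ℚ) ≤ Nat.card K ^ finrank K U - Nat.card K ^ k :=
      sub_nonneg.2 (pow_le_pow_right₀ hq.le (by omega))
    have hone : (0 : ℚ) ≤ Nat.card K ^ finrank K U - 1 := sub_nonneg.2 (one_le_pow₀ hq.le)
    refine le_of_mul_le_mul_right ?_ (sub_pos.2 hb)
    linear_combination mul_le_mul_of_nonneg_right ih ha + mul_le_mul_of_nonneg_right hstep hone

end FiniteField

theorem expect_indicator_Iic_smul_mul {B : Submodule K V} (hAB : A ≤ B) :
    𝔼 g : V ≃ₗ[K] V, (Set.Iic U).indicator 1 (g • B) * P.indicator 1 (g • A) =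
      density ⊤ (finrank K B) (Set.Iic U) * density U (finrank K A) P := by
  have hinvariant (h : MulAction.stabilizer (V ≃ₗ[K] V) U) (C : Submodule K V) :
      (Set.Iic U).indicator (1 : Submodule K V → ℚ) (h.1 • C) = (Set.Iic U).indicator 1 C := by
    classical
    simp only [Set.indicator_apply, Set.mem_Iic, smul_le_iff_of_stabilizer h, Pi.one_apply]
  have horbit : ((subspacesOfDim ⊤ (finrank K B) : Finset (Submodule K V)) : Set _) =
      MulAction.orbit (V ≃ₗ[K] V) B := by
    rw [orbit_linearEquiv_eq]
    exact Set.ext fun C => by simp [mem_subspacesOfDim]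
  calc 𝔼 g : V ≃ₗ[K] V, (Set.Iic U).indicator 1 (g • B) * P.indicator 1 (g • A)
      = 𝔼 h : MulAction.stabilizer (V ≃ₗ[K] V) U, 𝔼 g : V ≃ₗ[K] V,
          (Set.Iic U).indicator 1 (g • B) * P.indicator 1 (h • g • A) := by
        rw [← Fintype.expect_const (ι := MulAction.stabilizer (V ≃ₗ[K] V) U)
          (𝔼 g : V ≃ₗ[K] V, (Set.Iic U).indicator 1 (g • B) * P.indicator 1 (g • A))]
        refine expect_congr rfl fun h _ => ?_
        refine (Fintype.expect_equiv (Equiv.mulLeft h.1) _ _ fun g => ?_).symm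
        rw [Equiv.coe_mulLeft, mul_smul, mul_smul, hinvariant]
        rfl
    _ = 𝔼 g : V ≃ₗ[K] V, (Set.Iic U).indicator 1 (g • B) *
          𝔼 h : MulAction.stabilizer (V ≃ₗ[K] V) U, P.indicator 1 (h • g • A) := by
        rw [expect_comm]
        simp only [mul_expect]
    _ = 𝔼 g : V ≃ₗ[K] V, (Set.Iic U).indicator 1 (g • B) * density U (finrank K A) P := by
        refine expect_congr rfl fun g _ => ?_
        by_cases hB : g • B ≤ U
        · rw [expect_smul_eq_expect_subspacesOfDim (mem_subspacesOfDim.2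
            ⟨(smul_mono_right g hAB).trans hB, finrank_smul g A⟩), density]
        · simp [hB]
    _ = density ⊤ (finrank K B) (Set.Iic U) * density U (finrank K A) P := by
        rw [← expect_mul, expect_smul_eq_expect_of_orbit horbit, density, density]

end Density

section OwnSubspaces

variable {K V : Type*} [Field K] [AddCommGroup V] [Module K V]

/-- `A` is an own subspace (in the terminology of Erdős, Frankl and Füredi) of a member of `F`:
exactly one member of `F` contains it. -/
def IsOwn (F : Set (Submodule K V)) (A : Submodule K V) : Prop :=
  ∃! G, G ∈ F ∧ A ≤ G

/-- The member `G` of `F` contains a subspace of the chain `c` that no other member contains. -/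
def MeetsInOwn (F c : Set (Submodule K V)) (G : Submodule K V) : Prop :=
  ∃ A ∈ c, A ≤ G ∧ IsOwn F A

variable {F : Set (Submodule K V)} {A B G : Submodule K V}

theorem IsOwn.mono (hA : IsOwn F A) (hAB : A ≤ B) (hBG : B ≤ G) (hG : G ∈ F) : IsOwn F B :=
  ⟨G, ⟨hG, hBG⟩, fun _ h => hA.unique ⟨h.1, hAB.trans h.2⟩ ⟨hG, hAB.trans hBG⟩⟩

theorem exists_ne_of_not_isOwn (hA : ¬ IsOwn F A) (hG : G ∈ F) (hAG : A ≤ G) :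
    ∃ G' ∈ F, A ≤ G' ∧ G ≠ G' := by
  by_contra! h
  exact hA ⟨G, ⟨hG, hAG⟩, fun G' hG' => (h G' hG'.1 hG'.2).symm⟩

theorem IsCoverFree.isOwn_or_isOwn (hF : IsCoverFree F) (hanti : IsAntichain (· ≤ ·) F)
    (hG : G ∈ F) (hAB : A ⊔ B = G) : IsOwn F A ∨ IsOwn F B := by
  by_contra! h
  have hAG : A ≤ G := hAB ▸ le_sup_left
  have hBG : B ≤ G := hAB ▸ le_sup_right
  obtain ⟨G₁, hG₁, hA₁, hne₁⟩ := exists_ne_of_not_isOwn h.1 hG hAG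
  obtain ⟨G₂, hG₂, hB₂, hne₂⟩ := exists_ne_of_not_isOwn h.2 hG hBG
  refine hF ⟨G, G₁, G₂, hG, hG₁, hG₂, hne₁, hne₂, ?_, ?_⟩
  · rintro rfl
    exact hne₁ (hanti.eq hG hG₁ (hAB ▸ sup_le hA₁ hB₂))
  · exact hAB.ge.trans (sup_le_sup (le_inf hAG hA₁) (le_inf hBG hB₂))

theorem isAntichain_of_finrank_eq [FiniteDimensional K V] {d : ℕ}
    (hF : ∀ G ∈ F, finrank K G = d) : IsAntichain (· ≤ ·) F :=
  fun _ hG _ hG' hne hle => hne (eq_of_le_of_finrank_eq hle ((hF _ hG).trans (hF _ hG').symm))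

theorem MeetsInOwn.eq {c : Set (Submodule K V)} (hc : IsChain (· ≤ ·) c) {G G' : Submodule K V}
    (hG : G ∈ F) (hG' : G' ∈ F) (h : MeetsInOwn F c G) (h' : MeetsInOwn F c G') : G = G' := by
  obtain ⟨A, hA, hAG, hAF⟩ := h
  obtain ⟨A', hA', hAG', hAF'⟩ := h'
  rcases hc.total hA hA' with hle | hle
  · exact hAF.unique ⟨hG, hAG⟩ ⟨hG', hle.trans hAG'⟩
  · exact hAF'.unique ⟨hG, hle.trans hAG⟩ ⟨hG', hAG'⟩

/-- The event that the image of the chain `c` under a random linear automorphism contains an own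
subspace of `G`. -/
def meetsInOwnEvent (F c : Set (Submodule K V)) (G : Submodule K V) : Set (V ≃ₗ[K] V) :=
  {g | MeetsInOwn F (g • c) G}

theorem pairwiseDisjoint_meetsInOwnEvent {c : Set (Submodule K V)} (hc : IsChain (· ≤ ·) c) :
    F.PairwiseDisjoint (meetsInOwnEvent F c) := fun _ hG _ hG' hne =>
  Set.disjoint_left.2 fun g h h' =>
    hne (MeetsInOwn.eq ((smul_mono_right g).isChain_image hc) hG hG' h h')

theorem indicator_meetsInOwn {B T D : Submodule K V} (hBT : B ≤ T) (hTD : T ≤ D) (hG : G ∈ F) :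
    {c | MeetsInOwn F c G}.indicator (1 : Set (Submodule K V) → ℚ) {B, T, D} =
      (Set.Iic G).indicator 1 D * {A | IsOwn F A}.indicator 1 D
      + ((Set.Iic G).indicator 1 T * {A | IsOwn F A}.indicator 1 T
        - (Set.Iic G).indicator 1 D * {A | IsOwn F A}.indicator 1 T)
      + ((Set.Iic G).indicator 1 B * {A | IsOwn F A}.indicator 1 B
        - (Set.Iic G).indicator 1 T * {A | IsOwn F A}.indicator 1 B) := by
  classical
  have hmonoBT (h : B ≤ G ∧ T ≤ G) (hB : IsOwn F B) : IsOwn F T := hB.mono hBT h.2 hG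
  have hmonoTD (h : T ≤ G ∧ D ≤ G) (hT : IsOwn F T) : IsOwn F D := hT.mono hTD h.2 hG
  have hDT : D ≤ G → T ≤ G := hTD.trans
  have hTB : T ≤ G → B ≤ G := hBT.trans
  simp only [Set.indicator_apply, Set.mem_ofPred, MeetsInOwn, Set.mem_Iic, Set.mem_insert_iff,
    Set.mem_singleton_iff, exists_eq_or_imp, exists_eq_left, Pi.one_apply]
  grind

end OwnSubspaces

section RandomFlag

attribute [local instance] Fintype.ofFinite

-- Take a random flag of dimensions `t - 1`, `t`, `t + 1`, with `x = q ^ t` and `z = q ^ (n - t)`.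
-- Its subspace of dimension `t - 1 + i` lies in a given member with probability `pᵢ`, and is then
-- own with probability `oᵢ`. As `p₀ - p₁ > p₂`, replacing `o₂` by `1 - o₀` gives a lower bound that
-- increases with `o₀`.
theorem le_flag_average {q x z p₀ p₁ p₂ o₀ o₁ o₂ c : ℚ} (hq : 2 ≤ q) (hx : 1 < x)
    (hz : q * x ≤ z) (hp₁ : 0 < p₁) (hp₀₁ : p₁ * (q * z - 1) = p₀ * (q * x - 1))
    (hp₁₂ : p₂ * (z - 1) = p₁ * (x - 1)) (hc : c * ((z - 1) * (x + 1)) = p₁ * (x * z - 1))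
    (ho₀ : 0 ≤ o₀) (ho₀₂ : 1 ≤ o₀ + o₂) (ho₁ : x ≤ o₁ * (x + 1)) :
    c ≤ p₂ * o₂ + (p₁ - p₂) * o₁ + (p₀ - p₁) * o₀ ∧
      (p₂ * o₂ + (p₁ - p₂) * o₁ + (p₀ - p₁) * o₀ = c → o₀ = 0 ∧ o₁ * (x + 1) = x) := by
  have hqx : x < q * x := lt_mul_of_one_lt_left (by linarith) (by linarith)
  have hz₁ : 0 < z - 1 := by linarith
  have hx₁ : 0 < x + 1 := by linarith
  have hp₂ : 0 < p₂ := pos_of_mul_pos_left (hp₁₂ ▸ mul_pos hp₁ (sub_pos.2 hx)) hz₁.le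
  have h₁₂ : 0 < p₁ - p₂ := by
    refine pos_of_mul_pos_left (b := z - 1) ?_ hz₁.le
    have : 0 < p₁ * (z - x) := mul_pos hp₁ (by linarith)
    linear_combination this + hp₁₂
  have h₀₁₂ : 0 < p₀ - p₁ - p₂ := by
    have hqx₁ : 0 < q * x - 1 := by linarith
    have hgap : q * x - 1 < q * (z - x) := by nlinarith
    have hmul : (x - 1) * (q * x - 1) < (z - 1) * (q * (z - x)) :=
      mul_lt_mul'' (by linarith) hgap (by linarith) hqx₁.le
    refine pos_of_mul_pos_left (b := (q * x - 1) * (z - 1)) ?_ (mul_pos hqx₁ hz₁).le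
    linear_combination p₁ * hmul + (z - 1) * hp₀₁ + (q * x - 1) * hp₁₂
  have hdecomp : (p₂ * o₂ + (p₁ - p₂) * o₁ + (p₀ - p₁) * o₀ - c) * (x + 1) =
      p₂ * (o₀ + o₂ - 1) * (x + 1) + (p₁ - p₂) * (o₁ * (x + 1) - x)
        + (p₀ - p₁ - p₂) * o₀ * (x + 1) := by
    refine mul_right_cancel₀ hz₁.ne' ?_
    linear_combination - hc + hp₁₂
  have h₁ : 0 ≤ p₂ * (o₀ + o₂ - 1) * (x + 1) :=
    mul_nonneg (mul_nonneg hp₂.le (by linarith)) hx₁.le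
  have h₂ : 0 ≤ (p₁ - p₂) * (o₁ * (x + 1) - x) := mul_nonneg h₁₂.le (by linarith)
  have h₃ : 0 ≤ (p₀ - p₁ - p₂) * o₀ * (x + 1) := mul_nonneg (mul_nonneg h₀₁₂.le ho₀) hx₁.le
  constructor
  · refine sub_nonneg.1 (nonneg_of_mul_nonneg_left (b := x + 1) ?_ hx₁)
    linarith
  · intro heq
    rw [heq, sub_self, zero_mul] at hdecomp
    have h₂' : (p₁ - p₂) * (o₁ * (x + 1) - x) = 0 := by linarith
    have h₃' : (p₀ - p₁ - p₂) * o₀ * (x + 1) = 0 := by linarith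
    exact ⟨by simpa [h₀₁₂.ne', hx₁.ne'] using h₃', by simpa [h₁₂.ne', sub_eq_zero] using h₂'⟩

variable {K V : Type*} [Field K] [AddCommGroup V] [Module K V] [Finite V]
  {F : Set (Submodule K V)} {B T D G : Submodule K V} {s : ℕ}

theorem expect_indicator_meetsInOwnEvent (hBT : B ≤ T) (hTD : T ≤ D) (hG : G ∈ F) :
    𝔼 g, (meetsInOwnEvent F {B, T, D} G).indicator (1 : (V ≃ₗ[K] V) → ℚ) g =
      density ⊤ (finrank K D) (Set.Iic G) * density G (finrank K D) {A | IsOwn F A}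
      + (density ⊤ (finrank K T) (Set.Iic G) - density ⊤ (finrank K D) (Set.Iic G))
        * density G (finrank K T) {A | IsOwn F A}
      + (density ⊤ (finrank K B) (Set.Iic G) - density ⊤ (finrank K T) (Set.Iic G))
        * density G (finrank K B) {A | IsOwn F A} := by
  simp only [sub_mul, ← expect_indicator_Iic_smul_mul le_rfl,
    ← expect_indicator_Iic_smul_mul hBT, ← expect_indicator_Iic_smul_mul hTD,
    ← expect_sub_distrib, ← expect_add_distrib]
  refine expect_congr rfl fun g _ => ?_
  rw [← indicator_meetsInOwn (smul_mono_right g hBT) (smul_mono_right g hTD) hG,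
    ← Set.smul_set_singleton, ← Set.smul_set_insert, ← Set.smul_set_insert]
  rfl

theorem gaussQ_div_mul [Finite K] {t : ℕ} (ht : t ≠ 0) (hG : finrank K G = 2 * t)
    (hn : 2 * t < finrank K V) :
    GaussQ (Nat.card K) (2 * t - 1) t / GaussQ (Nat.card K) (finrank K V - 1) t *
        ((Nat.card K ^ (finrank K V - t) - 1) * (Nat.card K ^ t + 1)) =
      density ⊤ t (Set.Iic G) * (Nat.card K ^ t * Nat.card K ^ (finrank K V - t) - 1) := by
  have hq : 1 < Nat.card K := Finite.one_lt_card
  have hdensity := density_Iic_mul_gaussQ (k := t) (le_top : G ≤ ⊤) (by omega)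
  have hV := gaussQ_succ_left_mul (q := Nat.card K) (finrank K V - 1) t
  have hG' := gaussQ_succ_left_mul (q := Nat.card K) (2 * t - 1) t
  rw [Nat.sub_add_cancel (by omega)] at hV hG'
  rw [finrank_top, hG] at hdensity
  have hx : (1 : ℚ) < Nat.card K ^ t := one_lt_pow₀ (by exact_mod_cast hq) ht
  have hpow : (Nat.card K : ℚ) ^ finrank K V = Nat.card K ^ t * Nat.card K ^ (finrank K V - t) := by
    rw [← pow_add, Nat.add_sub_cancel' (by omega)]
  rw [hpow] at hV
  rw [show 2 * t - t = t by omega, two_mul, pow_add] at hG'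
  rw [two_mul] at hdensity ⊢
  rw [div_mul_eq_mul_div, div_eq_iff (gaussQ_pos hq (by omega)).ne']
  refine mul_right_cancel₀ (sub_pos.2 hx).ne' ?_
  linear_combination density ⊤ t (Set.Iic G) * (Nat.card K ^ t - 1) * hV
    - (Nat.card K ^ (finrank K V - t) - 1) * hG'
    - (Nat.card K ^ (finrank K V - t) - 1) * (Nat.card K ^ t - 1) * hdensity

theorem le_expect_indicator_meetsInOwnEvent [Finite K] (hF : IsCoverFree F)
    (hFdim : ∀ G ∈ F, finrank K G = 2 * (s + 1)) (hn : 2 * (s + 1) < finrank K V)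
    (hBT : B ≤ T) (hTD : T ≤ D) (hB : finrank K B = s) (hT : finrank K T = s + 1)
    (hD : finrank K D = s + 2) (hG : G ∈ F) {c : ℚ}
    (hc : c = GaussQ (Nat.card K) (2 * (s + 1) - 1) (s + 1) /
      GaussQ (Nat.card K) (finrank K V - 1) (s + 1)) :
    c ≤ 𝔼 g, (meetsInOwnEvent F {B, T, D} G).indicator (1 : (V ≃ₗ[K] V) → ℚ) g ∧
      (𝔼 g, (meetsInOwnEvent F {B, T, D} G).indicator (1 : (V ≃ₗ[K] V) → ℚ) g = c →
        density G s {A | IsOwn F A} = 0 ∧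
          density G (s + 1) {A | IsOwn F A} * (Nat.card K ^ (s + 1) + 1) =
            Nat.card K ^ (s + 1)) := by
  have hGdim := hFdim G hG
  have hq : 2 ≤ Nat.card K := Finite.one_lt_card
  have hown (A B : Submodule K V) (hAB : A ⊔ B = G) : IsOwn F A ∨ IsOwn F B :=
    hF.isOwn_or_isOwn (isAntichain_of_finrank_eq hFdim) hG hAB
  have hpow (k : ℕ) : (Nat.card K : ℚ) ^ (k + 1) = Nat.card K * Nat.card K ^ k := pow_succ' _ k
  have h₀₁ := density_Iic_succ_mul_sub_one (k := s) (le_top : G ≤ ⊤) (by omega)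
  have h₁₂ := density_Iic_succ_mul_sub_one (k := s + 1) (le_top : G ≤ ⊤) (by omega)
  have hcompl := density_compl_mul_le (P := {A | IsOwn F A}) s.add_one_ne_zero hGdim
    fun A B _ _ => hown A B
  rw [density_compl (by omega)] at hcompl
  rw [finrank_top, hGdim, show finrank K V - s = finrank K V - (s + 1) + 1 by omega,
    show 2 * (s + 1) - s = s + 1 + 1 by omega, hpow, hpow (s + 1)] at h₀₁
  rw [finrank_top, hGdim, show 2 * (s + 1) - (s + 1) = s + 1 by omega] at h₁₂
  rw [expect_indicator_meetsInOwnEvent hBT hTD hG, hB, hT, hD]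
  refine le_flag_average (q := Nat.card K) (z := Nat.card K ^ (finrank K V - (s + 1)))
    (by exact_mod_cast hq) (one_lt_pow₀ (by exact_mod_cast hq) s.succ_ne_zero) ?_
    (density_Iic_pos le_top (by omega)) h₀₁ h₁₂
    (hc ▸ gaussQ_div_mul s.succ_ne_zero hGdim hn) ?_
    (one_le_density_add_density (by omega) fun A B _ _ => hown A B) (by linarith)
  · rw [← hpow]
    exact pow_le_pow_right₀ (by exact_mod_cast one_le_two.trans hq) (by omega)
  · exact expect_nonneg fun _ _ => Set.indicator_nonneg (by simp) _

theorem density_isOwn_eq_and_isOwn_or_isOwn [Finite K] (hF : IsCoverFree F)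
    (hFdim : ∀ G ∈ F, finrank K G = 2 * (s + 1)) (hn : 2 * (s + 1) < finrank K V)
    (hcard : (F.ncard : ℚ) = GaussQ (Nat.card K) (finrank K V - 1) (s + 1) /
      GaussQ (Nat.card K) (2 * (s + 1) - 1) (s + 1))
    (hTD : T ≤ D) (hT : finrank K T = s + 1) (hD : finrank K D = s + 2) :
    (∀ G ∈ F, density G (s + 1) {A | IsOwn F A} * (Nat.card K ^ (s + 1) + 1) =
      Nat.card K ^ (s + 1)) ∧ (IsOwn F T ∨ IsOwn F D) := by
  obtain ⟨B, -, hBT, hB⟩ := exists_between_finrank_eq (bot_le : ⊥ ≤ T) (k := s) (by simp) (by omega)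
  have hq : 1 < Nat.card K := Finite.one_lt_card
  have hchain : IsChain (· ≤ ·) {B, T, D} := by
    refine ((IsChain.singleton.insert ?_).insert ?_) <;> simp [hBT, hTD, hBT.trans hTD]
  have hbound {G : Submodule K V} (hG : G ∈ F) :=
    le_expect_indicator_meetsInOwnEvent hF hFdim hn hBT hTD hB hT hD hG rfl
  obtain ⟨heq, hexists⟩ := expect_eq_and_exists_mem_of_card_mul_eq_one
    (s := F.toFinite.toFinset) (E := meetsInOwnEvent F {B, T, D})
    (by simpa using pairwiseDisjoint_meetsInOwnEvent hchain)
    (fun G hG => (hbound (F.toFinite.mem_toFinset.1 hG)).1) (by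
      rw [← Set.ncard_eq_toFinset_card F, hcard, div_mul_div_cancel₀ (gaussQ_pos hq (by omega)).ne',
        div_self (gaussQ_pos hq (by omega)).ne'])
  have hdensity {G : Submodule K V} (hG : G ∈ F) :=
    (hbound hG).2 (heq G (F.toFinite.mem_toFinset.2 hG))
  refine ⟨fun G hG => (hdensity hG).2, ?_⟩
  obtain ⟨G, hG, A, hA, hAG, hAF⟩ := hexists 1
  rw [one_smul] at hA
  rcases hA with rfl | rfl | rfl
  · have hzero := (hdensity (F.toFinite.mem_toFinset.1 hG)).1
    exact absurd hAF (notMem_of_density_eq_zero hzero hAG hB)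
  · exact Or.inl hAF
  · exact Or.inr hAF

end RandomFlag

section Structure

variable {K V : Type*} [Field K] [AddCommGroup V] [Module K V] [FiniteDimensional K V]

theorem exists_finrank_eq_inf_eq {C T U : Submodule K V} {k s : ℕ} (hCT : C ≤ T) (hCU : C ≤ U)
    (hUT : ¬ U ≤ T) (hk : k ≤ s) (hC : finrank K C = k) (hT : finrank K T = s + 1)
    (hU : finrank K U = k + 2) :
    ∃ T', C ≤ T' ∧ T' ≤ T ∧ finrank K T' = s ∧ T' ⊓ U = C := by
  obtain ⟨Q, hinf, hsup⟩ := exists_inf_eq_sup_eq (le_inf hCT hCU) (inf_le_left : T ⊓ U ≤ T)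
  have hCQ : C ≤ Q := hinf ▸ inf_le_right
  have hQT : Q ≤ T := hsup ▸ le_sup_right
  have hQ : s ≤ finrank K Q := by
    have hdim := finrank_sup_add_finrank_inf_eq (T ⊓ U) Q
    have hlt : finrank K ↥(T ⊓ U) < finrank K U :=
      finrank_lt_finrank_of_lt (inf_lt_right.2 hUT)
    rw [hinf, hsup] at hdim
    omega
  obtain ⟨T', hCT', hT'Q, hT'⟩ := exists_between_finrank_eq hCQ (hC.trans_le hk) hQ
  refine ⟨T', hCT', hT'Q.trans hQT, hT', le_antisymm ?_ (le_inf hCT' hCU)⟩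
  rw [← hinf]
  exact le_inf (inf_le_inf_right U (hT'Q.trans hQT)) (inf_le_left.trans hT'Q)

/-- Every flag consisting of a `t`-dimensional and a `(t + 1)`-dimensional subspace contains an own
subspace of some member of `F`. This is what equality in the averaging bound yields. -/
def OwnInEveryFlag (F : Set (Submodule K V)) (t : ℕ) : Prop :=
  ∀ ⦃T D : Submodule K V⦄, T ≤ D → finrank K T = t → finrank K D = t + 1 → IsOwn F T ∨ IsOwn F D

/-- No `t`-dimensional subspace containing `X` is an own subspace of a member of `F`. -/
def NoOwnAbove (F : Set (Submodule K V)) (t : ℕ) (X : Submodule K V) : Prop :=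
  ∀ ⦃T : Submodule K V⦄, finrank K T = t → X ≤ T → ¬ IsOwn F T

variable {F : Set (Submodule K V)} {C E G T X Y Z Z' : Submodule K V} {k s t : ℕ}

theorem noOwnAbove_iff_not_isOwn (hX : finrank K X = t) : NoOwnAbove F t X ↔ ¬ IsOwn F X :=
  ⟨fun h => h hX le_rfl, fun h _ hT hXT =>
    eq_of_le_of_finrank_eq hXT (hX.trans hT.symm) ▸ h⟩

theorem OwnInEveryFlag.le_of_isOwn (hF : OwnInEveryFlag F (s + 1)) (hC : finrank K C = s)
    (hZ : finrank K Z = s + 1) (hT : finrank K T = s + 1) (hCZ : C ≤ Z) (hCT : C ≤ T)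
    (hZF : ¬ IsOwn F Z) (hTF : IsOwn F T) (hG : G ∈ F) (hTG : T ≤ G) : Z ≤ G := by
  have hne : T ≠ Z := by
    rintro rfl
    exact hZF hTF
  obtain ⟨G', ⟨hG', hsup⟩, -⟩ :=
    (hF le_sup_right hZ (finrank_sup_of_ne hC hT hZ hCT hCZ hne)).resolve_left hZF
  rw [hTF.unique ⟨hG, hTG⟩ ⟨hG', le_sup_left.trans hsup⟩]
  exact le_sup_right.trans hsup

theorem OwnInEveryFlag.noOwnAbove_of_ne (hF : OwnInEveryFlag F (s + 1)) (htop : ⊤ ∉ F)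
    (hC : finrank K C = s) (hZ : finrank K Z = s + 1) (hZ' : finrank K Z' = s + 1) (hCZ : C ≤ Z)
    (hCZ' : C ≤ Z') (hne : Z ≠ Z') (hZF : ¬ IsOwn F Z) (hZF' : ¬ IsOwn F Z') :
    NoOwnAbove F (s + 1) C := by
  have hsup : IsOwn F (Z ⊔ Z') :=
    (hF le_sup_left hZ (finrank_sup_of_ne hC hZ hZ' hCZ hCZ' hne)).resolve_left hZF
  have hle {T G : Submodule K V} (hT : finrank K T = s + 1) (hCT : C ≤ T) (hTF : IsOwn F T)
      (hG : G ∈ F) (hTG : T ≤ G) : Z ⊔ Z' ≤ G :=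
    sup_le (hF.le_of_isOwn hC hZ hT hCZ hCT hZF hTF hG hTG)
      (hF.le_of_isOwn hC hZ' hT hCZ' hCT hZF' hTF hG hTG)
  intro T hT hCT hTF
  obtain ⟨G, ⟨hG, hTG⟩, -⟩ := id hTF
  obtain ⟨x, -, hxG⟩ := SetLike.not_le_iff_exists.1 (mt top_le_iff.1 fun h => htop (h ▸ hG))
  have hx : finrank K ↥(C ⊔ span K {x}) = s + 1 := by
    rw [finrank_sup_span_singleton fun h => hxG ((hCT.trans hTG) h), hC]
  have hxle {H : Submodule K V} (h : C ⊔ span K {x} ≤ H) : x ∈ H :=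
    h (mem_sup_right (mem_span_singleton_self x))
  have hxF : ¬ IsOwn F (C ⊔ span K {x}) := by
    intro h
    obtain ⟨H, ⟨hH, hxH⟩, -⟩ := id h
    have hHG : H = G := hsup.unique ⟨hH, hle hx le_sup_left h hH hxH⟩ ⟨hG, hle hT hCT hTF hG hTG⟩
    exact hxG (hHG ▸ hxle hxH)
  exact hxG (hxle (hF.le_of_isOwn hC hx hT le_sup_left hCT hxF hTF hG hTG))

theorem OwnInEveryFlag.noOwnAbove_of_noOwnAbove (hF : OwnInEveryFlag F (s + 1)) (htop : ⊤ ∉ F)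
    (hk : k ≤ s) (hC : finrank K C = k) (hX : finrank K X = k + 1) (hY : finrank K Y = k + 1)
    (hCX : C ≤ X) (hCY : C ≤ Y) (hne : X ≠ Y) (hXF : NoOwnAbove F (s + 1) X)
    (hYF : NoOwnAbove F (s + 1) Y) : NoOwnAbove F (s + 1) C := by
  intro T hT hCT
  by_cases hXYT : X ⊔ Y ≤ T
  · exact hXF hT (le_sup_left.trans hXYT)
  obtain ⟨T', hCT', hT'T, hT', hinf⟩ := exists_finrank_eq_inf_eq hCT (hCX.trans le_sup_left) hXYT
    hk hC hT (finrank_sup_of_ne hC hX hY hCX hCY hne)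
  have hmod {A : Submodule K V} (hCA : C ≤ A) (hA : A ≤ X ⊔ Y) : (A ⊔ T') ⊓ (X ⊔ Y) = A := by
    rw [sup_inf_assoc_of_le _ hA, hinf, sup_eq_left.2 hCA]
  have hdim {A : Submodule K V} (hCA : C ≤ A) (hA : A ≤ X ⊔ Y) (hAk : finrank K A = k + 1) :
      finrank K ↥(A ⊔ T') = s + 1 := by
    have hAT' : A ⊓ T' = C :=
      le_antisymm (hinf ▸ le_inf inf_le_right (inf_le_left.trans hA)) (le_inf hCA hCT')
    have := finrank_sup_add_finrank_inf_eq A T'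
    rw [hAT'] at this
    omega
  have hX' := hdim hCX le_sup_left hX
  have hY' := hdim hCY le_sup_right hY
  refine hF.noOwnAbove_of_ne htop hT' hX' hY' le_sup_right le_sup_right (fun h => hne ?_)
    (hXF hX' le_sup_left) (hYF hY' le_sup_left) hT hT'T
  rw [← hmod hCX le_sup_left, h, hmod hCY le_sup_right]

theorem OwnInEveryFlag.le_of_noOwnAbove (hF : OwnInEveryFlag F (s + 1)) (hE : finrank K E = 1)
    (hEF : NoOwnAbove F (s + 1) E) (hT : finrank K T = s + 1) (hTF : IsOwn F T) (hG : G ∈ F)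
    (hTG : T ≤ G) : E ≤ G := by
  obtain ⟨C, -, hCT, hC⟩ := exists_between_finrank_eq (bot_le : ⊥ ≤ T) (k := s) (by simp) (by omega)
  by_cases hEC : E ≤ C
  · exact hEC.trans (hCT.trans hTG)
  · have hsup : finrank K ↥(E ⊔ C) = s + 1 := hC ▸ finrank_sup_of_finrank_eq_one hE hEC
    exact le_sup_left.trans <|
      hF.le_of_isOwn hC hsup hT le_sup_right hCT (hEF hsup le_sup_left) hTF hG hTG

theorem OwnInEveryFlag.isOwn_of_not_le (hF : OwnInEveryFlag F (s + 1)) (hcf : IsCoverFree F)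
    (hFdim : ∀ G ∈ F, finrank K G = 2 * (s + 1)) (hs : s + 1 < finrank K V)
    (hE : finrank K E = 1) (hEF : NoOwnAbove F (s + 1) E) (hEG : ∀ G ∈ F, E ≤ G)
    (hT : finrank K T = s + 1) (hET : ¬ E ≤ T) : IsOwn F T := by
  by_contra hTF
  obtain ⟨D, hTD, -, hD⟩ :=
    exists_between_finrank_eq (le_top : T ≤ ⊤) (k := s + 2) (by omega) (by rwa [finrank_top])
  obtain ⟨G, ⟨hG, hDG⟩, -⟩ := (hF hTD hT hD).resolve_left hTF
  obtain ⟨T', hinf, hsup⟩ := exists_inf_eq_sup_eq le_sup_left (sup_le (hEG G hG) (hTD.trans hDG))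
  have hET' : E ≤ T' := hinf ▸ inf_le_right
  have hT' : finrank K T' = s + 1 := by
    have hdim := finrank_sup_add_finrank_inf_eq (E ⊔ T) T'
    rw [hinf, hsup, hFdim G hG, hE, finrank_sup_of_finrank_eq_one hE hET] at hdim
    omega
  have hTT' : T ⊔ T' = G := by
    rw [← hsup, sup_comm E T, sup_assoc, sup_eq_right.2 hET']
  exact (hcf.isOwn_or_isOwn (isAntichain_of_finrank_eq hFdim) hG hTT').elim hTF (hEF hT' hET')

end Structure

section SteinerSystem

variable {K V : Type*} [Field K] [AddCommGroup V] [Module K V]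
  {F S : Set (Submodule K V)} {E W : Submodule K V}

theorem sup_inf_eq_of_isCompl_of_le {G : Submodule K V} (hEW : IsCompl E W) (hEG : E ≤ G) :
    E ⊔ G ⊓ W = G := by
  rw [inf_comm, ← sup_inf_assoc_of_le _ hEG, hEW.sup_eq_top, top_inf_eq]

theorem injOn_sup_of_disjoint (hEW : Disjoint E W) (hS : ∀ A ∈ S, A ≤ W) :
    S.InjOn (E ⊔ ·) := by
  have hinf : ∀ A ∈ S, (A ⊔ E) ⊓ W = A := fun A hA => by
    rw [sup_inf_assoc_of_le _ (hS A hA), hEW.eq_bot, sup_bot_eq]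
  intro A hA B hB hAB
  rw [← hinf A hA, ← hinf B hB, sup_comm A, sup_comm B]
  exact congrArg (· ⊓ W) hAB

/-- `S` is a `q`-Steiner system `S_q(t, d, dim W)` on `W`. -/
structure IsSteinerSystem (t d : ℕ) (W : Submodule K V) (S : Set (Submodule K V)) : Prop where
  le_and_finrank_eq : ∀ A ∈ S, A ≤ W ∧ finrank K A = d
  existsUnique : ∀ T : Submodule K V, T ≤ W → finrank K T = t → ∃! A, A ∈ S ∧ T ≤ A

theorem isSteinerSystem_image_inf [FiniteDimensional K V] {t d : ℕ} (hE : finrank K E = 1)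
    (hEW : IsCompl E W) (hF : ∀ G ∈ F, E ≤ G ∧ finrank K G = d)
    (hown : ∀ T : Submodule K V, finrank K T = t → ¬ E ≤ T → IsOwn F T) :
    IsSteinerSystem t (d - 1) W ((· ⊓ W) '' F) where
  le_and_finrank_eq := by
    rintro _ ⟨G, hG, rfl⟩
    refine ⟨inf_le_right, ?_⟩
    have hdim := finrank_sup_add_finrank_inf_eq E (G ⊓ W)
    rw [sup_inf_eq_of_isCompl_of_le hEW (hF G hG).1, inf_left_comm, hEW.inf_eq_bot, inf_bot_eq,
      finrank_bot, hE, (hF G hG).2] at hdim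
    exact (Nat.sub_eq_of_eq_add' hdim).symm
  existsUnique T hTW hT := by
    have hET : ¬ E ≤ T := fun h => by
      rw [hEW.disjoint.eq_bot_of_le (h.trans hTW), finrank_bot] at hE
      exact zero_ne_one hE
    obtain ⟨G, ⟨hG, hTG⟩, hG_unique⟩ := hown T hT hET
    refine ⟨G ⊓ W, ⟨⟨G, hG, rfl⟩, le_inf hTG hTW⟩, ?_⟩
    rintro _ ⟨⟨G', hG', rfl⟩, hTG'⟩
    rw [hG_unique G' ⟨hG', hTG'.trans inf_le_left⟩]

end SteinerSystem

section Extremal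

variable {K V : Type*} [Field K] [Finite K] [AddCommGroup V] [Module K V] [Finite V]
  {F S : Set (Submodule K V)} {E G W : Submodule K V} {s t d : ℕ}

theorem OwnInEveryFlag.exists_noOwnAbove (hF : OwnInEveryFlag F (s + 1))
    (htop : ⊤ ∉ F) (hG : finrank K G = 2 * (s + 1))
    (hown : density G (s + 1) {A | IsOwn F A} * (Nat.card K ^ (s + 1) + 1) =
      Nat.card K ^ (s + 1)) :
    ∃ E : Submodule K V, finrank K E = 1 ∧ NoOwnAbove F (s + 1) E := by
  have hq : (1 : ℚ) < Nat.card K := by exact_mod_cast Finite.one_lt_card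
  have htop_dim : density G (s + 1) {X | NoOwnAbove F (s + 1) X} =
      1 - density G (s + 1) {A | IsOwn F A} := by
    rw [← density_compl (by omega)]
    refine expect_congr rfl fun A hA => ?_
    classical
    simp only [Set.indicator_apply, Set.mem_compl_iff, Set.mem_ofPred,
      noOwnAbove_iff_not_isOwn (mem_subspacesOfDim.1 hA).2]
  have hone := pow_sub_one_le_density_mul (U := G) (P := {X | NoOwnAbove F (s + 1) X})
    (t := s + 1) (k := 1) (by omega)
    (fun k hk C X Y hC hX hY hCX hCY hne =>
      hF.noOwnAbove_of_noOwnAbove htop (Nat.lt_succ_iff.1 hk) hC hX hY hCX hCY hne)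
    (by
      rw [htop_dim, hG, two_mul, pow_add]
      linear_combination (Nat.card K ^ (s + 1) - 1) * hown)
    (by omega)
  have hpos : 0 < density G 1 {X | NoOwnAbove F (s + 1) X} := by
    rw [pow_one] at hone
    exact pos_of_mul_pos_left ((sub_pos.2 hq).trans_le hone)
      (sub_nonneg.2 (one_le_pow₀ hq.le))
  obtain ⟨E, -, hE⟩ := exists_mem_of_density_pos hpos
  exact ⟨E, hE⟩

theorem exists_le_and_isOwn_of_ncard_eq (hF : IsCoverFree F)
    (hFdim : ∀ G ∈ F, finrank K G = 2 * (s + 1)) (hn : 2 * (s + 1) < finrank K V)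
    (hcard : (F.ncard : ℚ) = GaussQ (Nat.card K) (finrank K V - 1) (s + 1) /
      GaussQ (Nat.card K) (2 * (s + 1) - 1) (s + 1)) :
    ∃ E : Submodule K V, finrank K E = 1 ∧ (∀ G ∈ F, E ≤ G) ∧
      ∀ T : Submodule K V, finrank K T = s + 1 → ¬ E ≤ T → IsOwn F T := by
  have hq : 1 < Nat.card K := Finite.one_lt_card
  have hflag : OwnInEveryFlag F (s + 1) := fun T D hTD hT hD =>
    (density_isOwn_eq_and_isOwn_or_isOwn hF hFdim hn hcard hTD hT hD).2
  have hown : ∀ G ∈ F, density G (s + 1) {A | IsOwn F A} * (Nat.card K ^ (s + 1) + 1) =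
      Nat.card K ^ (s + 1) := by
    obtain ⟨T, -, -, hT⟩ :=
      exists_between_finrank_eq (bot_le : (⊥ : Submodule K V) ≤ ⊤) (k := s + 1) (by simp)
        (by rw [finrank_top]; omega)
    obtain ⟨D, hTD, -, hD⟩ :=
      exists_between_finrank_eq (le_top : T ≤ ⊤) (k := s + 2) (by omega)
        (by rw [finrank_top]; omega)
    exact (density_isOwn_eq_and_isOwn_or_isOwn hF hFdim hn hcard hTD hT hD).1
  have htop : ⊤ ∉ F := fun h => by
    have := hFdim ⊤ h
    rw [finrank_top] at this
    omega
  obtain ⟨G₀, hG₀⟩ : F.Nonempty := by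
    refine Set.nonempty_of_ncard_ne_zero (Nat.cast_ne_zero (R := ℚ).1 ?_)
    rw [hcard]
    exact (div_pos (gaussQ_pos hq (by omega)) (gaussQ_pos hq (by omega))).ne'
  obtain ⟨E, hE, hEF⟩ := hflag.exists_noOwnAbove htop (hFdim G₀ hG₀) (hown G₀ hG₀)
  have hEG (G) (hG : G ∈ F) : E ≤ G := by
    have hpos : 0 < density G (s + 1) {A | IsOwn F A} :=
      pos_of_mul_pos_left (b := (Nat.card K : ℚ) ^ (s + 1) + 1)
        (by rw [hown G hG]; positivity) (by positivity)
    obtain ⟨T, hTG, hT, hTF⟩ := exists_mem_of_density_pos hpos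
    exact hflag.le_of_noOwnAbove hE hEF hT hTF hG hTG
  exact ⟨E, hE, hEG, fun T => hflag.isOwn_of_not_le hF hFdim (by omega) hE hEF hEG⟩

theorem IsSteinerSystem.ncard_mul_gaussQ (hS : IsSteinerSystem t d W S) (htW : t ≤ finrank K W) :
    S.ncard * GaussQ (Nat.card K) d t = GaussQ (Nat.card K) (finrank K W) t := by
  have htd : t ≤ d := by
    obtain ⟨T, hT⟩ := subspacesOfDim_nonempty htW
    obtain ⟨hTW, rfl⟩ := mem_subspacesOfDim.1 hT
    obtain ⟨A, ⟨hA, hTA⟩, -⟩ := hS.existsUnique T hTW rfl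
    exact (finrank_mono hTA).trans_eq (hS.le_and_finrank_eq A hA).2
  have hsum : ∑ A ∈ S.toFinite.toFinset, density W t (Set.Iic A) = 1 := by
    simp only [density]
    rw [← expect_sum_comm, ← expect_const (subspacesOfDim_nonempty htW) (1 : ℚ)]
    refine expect_congr rfl fun T hT => ?_
    obtain ⟨hTW, hTt⟩ := mem_subspacesOfDim.1 hT
    obtain ⟨A, ⟨hA, hTA⟩, hA_unique⟩ := hS.existsUnique T hTW hTt
    rw [sum_eq_single_of_mem A (S.toFinite.mem_toFinset.2 hA),
      Set.indicator_of_mem (Set.mem_Iic.2 hTA), Pi.one_apply]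
    exact fun B hB hne => Set.indicator_of_notMem
      (fun hTB => hne (hA_unique B ⟨S.toFinite.mem_toFinset.1 hB, hTB⟩)) _
  rw [Set.ncard_eq_toFinset_card S, ← nsmul_eq_mul, ← sum_const,
    ← one_mul (GaussQ _ (finrank K W) t), ← hsum, sum_mul]
  refine sum_congr rfl fun A hA => ?_
  obtain ⟨hAW, rfl⟩ := hS.le_and_finrank_eq A (S.toFinite.mem_toFinset.1 hA)
  exact (density_Iic_mul_gaussQ hAW htd).symm

end Extremal

theorem stmt1 (q n t : ℕ) (K : Type*) [Field K] [Fintype K] (hK : Fintype.card K = q)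
    (V : Type*) [AddCommGroup V] [Module K V] [FiniteDimensional K V]
    (hV : Module.finrank K V = n) (ht : 1 ≤ t) (hn : 2 * t + 1 ≤ n)
    (F : Set (Submodule K V)) (hdim : ∀ A ∈ F, Module.finrank K A = 2 * t)
    (hcf : IsCoverFree F) :
    (F.ncard : ℚ) = GaussQ q (n - 1) t / GaussQ q (2 * t - 1) t ↔
      ∃ E W : Submodule K V, Module.finrank K E = 1 ∧ Module.finrank K W = n - 1 ∧
        E ⊓ W = ⊥ ∧ E ⊔ W = ⊤ ∧
        ∃ S : Set (Submodule K V),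
          (∀ A ∈ S, A ≤ W ∧ Module.finrank K A = 2 * t - 1) ∧
          (∀ T : Submodule K V, T ≤ W → Module.finrank K T = t →
            ∃! A, A ∈ S ∧ T ≤ A) ∧
          F = (fun A => E ⊔ A) '' S := by
  obtain ⟨s, rfl⟩ : ∃ s, t = s + 1 := ⟨t - 1, by omega⟩
  have : Finite V := Module.finite_of_finite K
  rw [← Nat.card_eq_fintype_card] at hK
  subst hK hV
  constructor
  · intro hcard
    obtain ⟨E, hE, hEF, hown⟩ := exists_le_and_isOwn_of_ncard_eq hcf hdim hn hcard
    obtain ⟨W, hEW⟩ := Submodule.exists_isCompl E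
    have hW := finrank_add_eq_of_isCompl hEW
    have hS := isSteinerSystem_image_inf hE hEW (fun G hG => ⟨hEF G hG, hdim G hG⟩) hown
    refine ⟨E, W, hE, by omega, hEW.inf_eq_bot, hEW.sup_eq_top, (· ⊓ W) '' F,
      hS.le_and_finrank_eq, hS.existsUnique, ?_⟩
    rw [Set.image_image,
      Set.image_congr fun G hG => sup_inf_eq_of_isCompl_of_le hEW (hEF G hG), Set.image_id']
  · rintro ⟨E, W, -, hW, hinf, -, S, hS, hST, rfl⟩
    have hcount := IsSteinerSystem.ncard_mul_gaussQ ⟨hS, hST⟩ (by omega)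
    rw [(injOn_sup_of_disjoint (disjoint_iff.2 hinf) fun A hA => (hS A hA).1).ncard_image,
      eq_div_iff (gaussQ_pos Finite.one_lt_card (by omega)).ne', hcount, hW]
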